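/- The equivalence relation on generalized rectangular diagrams generated by the elementary moves of type L (cyclic permutations, commutations, stabilizations and destabilizations of type L, end shifts of type L, and vertex additions) coincides with the equivalence relation generated by commutations, end shifts of type L and vertex additions alone. -/

import Mathlib

namespace RectDiag

/-- A generalized rectangular diagram: a finite subset of `ℝ²`, whose elements are
called the vertices of the diagram. -/
abbrev GRD := Finset (ℝ × ℝ)

/-- Two diagrams are combinatorially equivalent (and hence identified) if one maps onto
the other under `(x, y) ↦ (f x, g y)` for some strictly increasing `f g : ℝ → ℝ`. -/
def CombEquiv (R R' : GRD) : Prop :=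
  ∃ f g : ℝ → ℝ, StrictMono f ∧ StrictMono g ∧
    R' = R.image fun p => (f p.1, g p.2)

/-- Move every vertex on the vertical line `x = a` to the vertical line `x = b`. -/
noncomputable def moveCol (R : GRD) (a b : ℝ) : GRD :=
  R.image fun p => if p.1 = a then (b, p.2) else p

/-- Move every vertex on the horizontal line `y = a` to the horizontal line `y = b`. -/
noncomputable def moveRow (R : GRD) (a b : ℝ) : GRD :=
  R.image fun p => if p.2 = a then (p.1, b) else p

/-- Cyclic permutation: an extreme (rightmost, leftmost, top or bottom) edge is moved
to the opposite side of the diagram; only the coordinate perpendicular to the edge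
changes. -/
def CyclicPermutation (R R' : GRD) : Prop :=
  (∃ a b : ℝ, (∃ p ∈ R, p.1 = a) ∧
    (((∀ p ∈ R, p.1 ≤ a) ∧ ∀ p ∈ R, b < p.1) ∨
     ((∀ p ∈ R, a ≤ p.1) ∧ ∀ p ∈ R, p.1 < b)) ∧
    R' = moveCol R a b) ∨
  (∃ a b : ℝ, (∃ p ∈ R, p.2 = a) ∧
    (((∀ p ∈ R, p.2 ≤ a) ∧ ∀ p ∈ R, b < p.2) ∨
     ((∀ p ∈ R, a ≤ p.2) ∧ ∀ p ∈ R, p.2 < b)) ∧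
    R' = moveRow R a b)

/-- Two sets of reals interleave in the cyclic order: their elements alternate
`a₁ < b₁ < a₂ < b₂` (or with the roles of the two sets exchanged). -/
def Interleave (A B : ℝ → Prop) : Prop :=
  (∃ a₁, A a₁ ∧ ∃ b₁, B b₁ ∧ ∃ a₂, A a₂ ∧ ∃ b₂, B b₂ ∧ a₁ < b₁ ∧ b₁ < a₂ ∧ a₂ < b₂) ∨
  (∃ b₁, B b₁ ∧ ∃ a₁, A a₁ ∧ ∃ b₂, B b₂ ∧ ∃ a₂, A a₂ ∧ b₁ < a₁ ∧ a₁ < b₂ ∧ b₂ < a₂)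

/-- Exchange the vertical lines `x = a` and `x = b` of a diagram. -/
noncomputable def swapCols (R : GRD) (a b : ℝ) : GRD :=
  R.image fun p => if p.1 = a then (b, p.2) else if p.1 = b then (a, p.2) else p

/-- Exchange the horizontal lines `y = a` and `y = b` of a diagram. -/
noncomputable def swapRows (R : GRD) (a b : ℝ) : GRD :=
  R.image fun p => if p.2 = a then (p.1, b) else if p.2 = b then (p.1, a) else p

/-- Commutation: two neighboring parallel edges (no vertex lies strictly between the
two parallel lines containing them) that do not interleave exchange their positions. -/
def Commutation (R R' : GRD) : Prop :=
  (∃ a b : ℝ, a < b ∧ (∃ p ∈ R, p.1 = a) ∧ (∃ p ∈ R, p.1 = b) ∧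
    (∀ p ∈ R, ¬ (a < p.1 ∧ p.1 < b)) ∧
    ¬ Interleave (fun y => (a, y) ∈ R) (fun y => (b, y) ∈ R) ∧
    R' = swapCols R a b) ∨
  (∃ a b : ℝ, a < b ∧ (∃ p ∈ R, p.2 = a) ∧ (∃ p ∈ R, p.2 = b) ∧
    (∀ p ∈ R, ¬ (a < p.2 ∧ p.2 < b)) ∧
    ¬ Interleave (fun x => (x, a) ∈ R) (fun x => (x, b) ∈ R) ∧
    R' = swapRows R a b)

def strictlyBetween (a t b : ℝ) : Prop := (a < t ∧ t < b) ∨ (b < t ∧ t < a)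

/-- Stabilization: a vertex `(x, y)` is replaced by the three other corners of a small
square with corners `(x, y)`, `(x', y)`, `(x, y')`, `(x', y')` (fresh lines `x'`, `y'`,
with no vertex of the diagram strictly between the lines `x, x'` nor between `y, y'`).
The two new short edges (sides of the square through the corner `(x', y')`) emerge from
their common end downward-and-leftward or upward-and-rightward exactly when the square
lies to the upper right or to the lower left of the original vertex (type L,
`typeL = true`); for type N (`typeL = false`) they emerge upward-and-leftward or
downward-and-rightward, i.e. the square lies to the upper left or to the lower right. -/
def Stab (typeL : Bool) (R R' : GRD) : Prop :=
  ∃ x y x' y' : ℝ, (x, y) ∈ R ∧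
    (if typeL then ((x < x' ∧ y < y') ∨ (x' < x ∧ y' < y))
     else ((x' < x ∧ y < y') ∨ (x < x' ∧ y' < y))) ∧
    (∀ p ∈ R, ¬ strictlyBetween x p.1 x') ∧
    (∀ p ∈ R, ¬ strictlyBetween y p.2 y') ∧
    (∀ p ∈ R, p.1 ≠ x') ∧ (∀ p ∈ R, p.2 ≠ y') ∧
    R' = insert (x', y) (insert (x, y') (insert (x', y') (R.erase (x, y))))

/-- End shift.  For adjacent vertices `v₁`, `v₂` on an edge (no vertex of the diagram
between them on the edge), where for type L (`typeL = true`) the vertex `v₂` has the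
greater coordinate along the edge and for type N (`typeL = false`) the smaller one:
either the shifts of `v₁`, `v₂` by `ε > 0` in the positive perpendicular direction are
added and `v₁` is removed, or the shifts by `ε` in the negative perpendicular direction
are added and `v₂` is removed; `ε` is small enough that no vertex of the diagram lies
between (or on) the line through `v₁, v₂` and the line through the shifted vertices. -/
def EndShift (typeL : Bool) (R R' : GRD) : Prop :=
  (∃ a y₁ y₂ ε : ℝ, 0 < ε ∧ y₁ < y₂ ∧ (a, y₁) ∈ R ∧ (a, y₂) ∈ R ∧
    (∀ t : ℝ, (a, t) ∈ R → ¬ (y₁ < t ∧ t < y₂)) ∧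
    (((∀ p ∈ R, ¬ (a < p.1 ∧ p.1 ≤ a + ε)) ∧
       R' = insert (a + ε, y₁) (insert (a + ε, y₂)
         (R.erase (a, if typeL then y₁ else y₂)))) ∨
     ((∀ p ∈ R, ¬ (a - ε ≤ p.1 ∧ p.1 < a)) ∧
       R' = insert (a - ε, y₁) (insert (a - ε, y₂)
         (R.erase (a, if typeL then y₂ else y₁)))))) ∨
  (∃ a x₁ x₂ ε : ℝ, 0 < ε ∧ x₁ < x₂ ∧ (x₁, a) ∈ R ∧ (x₂, a) ∈ R ∧
    (∀ t : ℝ, (t, a) ∈ R → ¬ (x₁ < t ∧ t < x₂)) ∧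
    (((∀ p ∈ R, ¬ (a < p.2 ∧ p.2 ≤ a + ε)) ∧
       R' = insert (x₁, a + ε) (insert (x₂, a + ε)
         (R.erase (if typeL then x₁ else x₂, a)))) ∨
     ((∀ p ∈ R, ¬ (a - ε ≤ p.2 ∧ p.2 < a)) ∧
       R' = insert (x₁, a - ε) (insert (x₂, a - ε)
         (R.erase (if typeL then x₂ else x₁, a))))))

/-- Vertex addition: a new vertex is added on the vertical (respectively horizontal)
line through an existing vertex, provided no vertex of the diagram lies on the
horizontal (respectively vertical) line through the new vertex. -/
def VertexAddition (R R' : GRD) : Prop :=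
  ∃ v : ℝ × ℝ, v ∉ R ∧ R' = insert v R ∧
    (((∃ w ∈ R, w.1 = v.1) ∧ ∀ w ∈ R, w.2 ≠ v.2) ∨
     ((∃ w ∈ R, w.2 = v.2) ∧ ∀ w ∈ R, w.1 ≠ v.1))

/-- An elementary move of type L (`typeL = true`) or N (`typeL = false`): a cyclic
permutation, a commutation, a stabilization or destabilization of the given type, an
end shift of the given type, or a vertex addition. -/
def ElemMove (typeL : Bool) (R R' : GRD) : Prop :=
  CyclicPermutation R R' ∨ Commutation R R' ∨ Stab typeL R R' ∨ Stab typeL R' R ∨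
    EndShift typeL R R' ∨ VertexAddition R R'

/-- One step in a sequence of elementary moves of the given type; since diagrams are
identified up to combinatorial equivalence, combinatorially equivalent diagrams are
also related by a step. -/
def Step (typeL : Bool) (R R' : GRD) : Prop :=
  ElemMove typeL R R' ∨ CombEquiv R R'

/-- In the cyclic order (on `ℝ` closed up into a circle), the elements of `A`, then the
point `u`, then the elements of `B` occur in this cyclic order. -/
def CyclicBetween (A : Finset ℝ) (u : ℝ) (B : Finset ℝ) : Prop :=
  ((∀ a ∈ A, a < u) ∧ (∀ b ∈ B, u < b)) ∨
  ((∀ b ∈ B, u < b) ∧ (∀ a ∈ A, ∀ b ∈ B, b < a)) ∨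
  ((∀ a ∈ A, a < u) ∧ (∀ a ∈ A, ∀ b ∈ B, b < a))

/-- Edge breaking.  The vertices of a horizontal (respectively vertical) edge on the
line `c` are separated into two nonempty parts `S₁`, `S₂`, placed on neighboring lines
`c₁ ≤ c ≤ c₂` (`c₁ < c₂`, with no other vertex of the diagram between the lines `c₁`
and `c₂`), forming edges `e₁` (from `S₁`, on `c₁`) and `e₂` (from `S₂`, on `c₂`, the one
with the greater perpendicular coordinate); the two pieces are joined by a short edge on
a fresh line `u`, which in the cyclic order is greater than the coordinates of the
vertices of `e₂` and smaller than those of `e₁` for type L, and the other way around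
(the roles of `e₁` and `e₂` exchanged) for type N. -/
def EdgeBreaking (typeL : Bool) (R R' : GRD) : Prop :=
  (∃ c c₁ c₂ u : ℝ, ∃ S₁ S₂ : Finset ℝ,
    c₁ < c₂ ∧ c₁ ≤ c ∧ c ≤ c₂ ∧ S₁.Nonempty ∧ S₂.Nonempty ∧ Disjoint S₁ S₂ ∧
    (∀ x : ℝ, (x, c) ∈ R ↔ x ∈ S₁ ∪ S₂) ∧
    (∀ p ∈ R, p.1 ≠ u) ∧
    (∀ p ∈ R, c₁ ≤ p.2 ∧ p.2 ≤ c₂ → p.2 = c) ∧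
    (if typeL then CyclicBetween S₂ u S₁ else CyclicBetween S₁ u S₂) ∧
    R' = ((R.filter fun p => p.2 ≠ c) ∪ S₁.image (fun x => (x, c₁)) ∪
      S₂.image (fun x => (x, c₂)) ∪ {(u, c₁), (u, c₂)})) ∨
  (∃ c c₁ c₂ u : ℝ, ∃ S₁ S₂ : Finset ℝ,
    c₁ < c₂ ∧ c₁ ≤ c ∧ c ≤ c₂ ∧ S₁.Nonempty ∧ S₂.Nonempty ∧ Disjoint S₁ S₂ ∧
    (∀ y : ℝ, (c, y) ∈ R ↔ y ∈ S₁ ∪ S₂) ∧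
    (∀ p ∈ R, p.2 ≠ u) ∧
    (∀ p ∈ R, c₁ ≤ p.1 ∧ p.1 ≤ c₂ → p.1 = c) ∧
    (if typeL then CyclicBetween S₂ u S₁ else CyclicBetween S₁ u S₂) ∧
    R' = ((R.filter fun p => p.1 ≠ c) ∪ S₁.image (fun y => (c₁, y)) ∪
      S₂.image (fun y => (c₂, y)) ∪ {(c₁, u), (c₂, u)}))

/-- `p` lies in the open rectangle `(x₀, x₁) × (y₀, y₁)`. -/
def inRect (x₀ x₁ y₀ y₁ : ℝ) (p : ℝ × ℝ) : Prop :=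
  x₀ < p.1 ∧ p.1 < x₁ ∧ y₀ < p.2 ∧ p.2 < y₁

/-- A flype of type L (in the forward direction): for `x₀ < x₁ < x₂`, `y₀ < y₁ < y₂`,
with rectangles `r_ij = (x_i, x_{i+1}) × (y_j, y_{j+1})`: the rectangle `r₁₁` contains
no vertex; in each of `r₀₁` and `r₁₀`, of any two vertices the right one is higher; and
every vertex `v` in `r₀₀` has a vertex `v₀₁ ∈ r₀₁` with the same `x`-coordinate and a
vertex `v₁₀ ∈ r₁₀` with the same `y`-coordinate.  The move takes each such `v` to the
fourth corner of the rectangle with corners `v`, `v₀₁`, `v₁₀`, all other vertices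
staying fixed. -/
def FlypeLOnce (R R' : GRD) : Prop :=
  ∃ x₀ x₁ x₂ y₀ y₁ y₂ : ℝ, x₀ < x₁ ∧ x₁ < x₂ ∧ y₀ < y₁ ∧ y₁ < y₂ ∧
    (∀ p ∈ R, ¬ inRect x₁ x₂ y₁ y₂ p) ∧
    (∀ p ∈ R, ∀ q ∈ R, inRect x₀ x₁ y₁ y₂ p → inRect x₀ x₁ y₁ y₂ q →
      p.1 < q.1 → p.2 < q.2) ∧
    (∀ p ∈ R, ∀ q ∈ R, inRect x₁ x₂ y₀ y₁ p → inRect x₁ x₂ y₀ y₁ q →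
      p.1 < q.1 → p.2 < q.2) ∧
    ∃ φ : ℝ × ℝ → ℝ × ℝ,
      (∀ p ∈ R, ¬ inRect x₀ x₁ y₀ y₁ p → φ p = p) ∧
      (∀ p ∈ R, inRect x₀ x₁ y₀ y₁ p →
        ∃ q ∈ R, ∃ r ∈ R, inRect x₀ x₁ y₁ y₂ q ∧ q.1 = p.1 ∧
          inRect x₁ x₂ y₀ y₁ r ∧ r.2 = p.2 ∧ φ p = (r.1, q.2)) ∧
      R' = R.image φ

/-- A flype of type L: the move just described or its inverse. -/
def FlypeL (R R' : GRD) : Prop := FlypeLOnce R R' ∨ FlypeLOnce R' R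

/-- A fence diagram: posts are horizontal segments `[l, r] × {y}`, `y ∈ posts` (all
related by a vertical shift); wires are vertical segments recorded as
`(x, bottom level, top level)`, with endpoints interior to posts and no two wires on
the same vertical line. -/
structure Fence where
  posts : Finset ℝ
  l : ℝ
  r : ℝ
  wires : Finset (ℝ × ℝ × ℝ)
  hlr : l < r
  hx : ∀ w ∈ wires, l < w.1 ∧ w.1 < r
  hy : ∀ w ∈ wires, w.2.1 ∈ posts ∧ w.2.2 ∈ posts ∧ w.2.1 < w.2.2
  hinj : ∀ w ∈ wires, ∀ w' ∈ wires, w.1 = w'.1 → w = w'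

/-- Combinatorial equivalence of fence diagrams. -/
def FenceEquiv (F F' : Fence) : Prop :=
  ∃ f g : ℝ → ℝ, StrictMono f ∧ StrictMono g ∧
    F'.l = f F.l ∧ F'.r = f F.r ∧
    F'.posts = F.posts.image g ∧
    F'.wires = F.wires.image fun w => (f w.1, g w.2.1, g w.2.2)

/-- The wire on the vertical line `x` joining the posts at levels `p` and `q`. -/
noncomputable def mkWire (x p q : ℝ) : ℝ × ℝ × ℝ := (x, min p q, max p q)

/-- Twirl: the top (respectively bottom) post is moved to the opposite side, taking
along all wires attached to it. -/
def Twirl (F F' : Fence) : Prop :=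
  F'.l = F.l ∧ F'.r = F.r ∧
  ((∃ t b : ℝ, t ∈ F.posts ∧ (∀ y ∈ F.posts, y ≤ t) ∧ (∀ y ∈ F.posts, b < y) ∧
     F'.posts = insert b (F.posts.erase t) ∧
     F'.wires = F.wires.image fun w => if w.2.2 = t then (w.1, b, w.2.1) else w) ∨
   (∃ t b : ℝ, b ∈ F.posts ∧ (∀ y ∈ F.posts, b ≤ y) ∧ (∀ y ∈ F.posts, y < t) ∧
     F'.posts = insert t (F.posts.erase b) ∧
     F'.wires = F.wires.image fun w => if w.2.1 = b then (w.1, w.2.2, t) else w))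

/-- Turn: the rightmost (respectively leftmost) wire is moved to the opposite side. -/
def Turn (F F' : Fence) : Prop :=
  F'.l = F.l ∧ F'.r = F.r ∧ F'.posts = F.posts ∧
  ((∃ w ∈ F.wires, ∃ x : ℝ, (∀ w' ∈ F.wires, w'.1 ≤ w.1) ∧
     F.l < x ∧ (∀ w' ∈ F.wires, w' ≠ w → x < w'.1) ∧ x < w.1 ∧
     F'.wires = insert (x, w.2) (F.wires.erase w)) ∨
   (∃ w ∈ F.wires, ∃ x : ℝ, (∀ w' ∈ F.wires, w.1 ≤ w'.1) ∧
     x < F.r ∧ (∀ w' ∈ F.wires, w' ≠ w → w'.1 < x) ∧ w.1 < x ∧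
     F'.wires = insert (x, w.2) (F.wires.erase w)))

/-- Two wires interleave if exactly one endpoint level of one lies strictly between the
endpoint levels of the other. -/
def WiresInterleave (w w' : ℝ × ℝ × ℝ) : Prop :=
  (w.2.1 < w'.2.1 ∧ w'.2.1 < w.2.2 ∧ w.2.2 < w'.2.2) ∨
  (w'.2.1 < w.2.1 ∧ w.2.1 < w'.2.2 ∧ w'.2.2 < w.2.2)

/-- Slip: two neighboring non-interleaving wires exchange their horizontal positions. -/
def Slip (F F' : Fence) : Prop :=
  F'.l = F.l ∧ F'.r = F.r ∧ F'.posts = F.posts ∧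
  ∃ w₁ ∈ F.wires, ∃ w₂ ∈ F.wires, w₁.1 < w₂.1 ∧
    (∀ w ∈ F.wires, ¬ (w₁.1 < w.1 ∧ w.1 < w₂.1)) ∧
    ¬ WiresInterleave w₁ w₂ ∧
    F'.wires = insert (w₂.1, w₁.2) (insert (w₁.1, w₂.2) ((F.wires.erase w₁).erase w₂))

/-- `a`, `b`, `c` occur in this cyclic order on `ℝ` closed up into a circle. -/
def CyclicOrd3 (a b c : ℝ) : Prop :=
  (a < b ∧ b < c) ∨ (b < c ∧ c < a) ∨ (c < a ∧ a < b)

/-- Slide: given two neighboring wires, the left joining posts at levels `a` and `b`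
and the right joining posts at levels `a` and `c` with `a < b < c < a` in the cyclic
order, they are replaced by two wires at the same horizontal positions, the left
joining levels `b` and `c` and the right joining levels `b` and `a`. -/
def Slide (F F' : Fence) : Prop :=
  F'.l = F.l ∧ F'.r = F.r ∧ F'.posts = F.posts ∧
  ∃ a b c x₁ x₂ : ℝ, x₁ < x₂ ∧ CyclicOrd3 a b c ∧
    mkWire x₁ a b ∈ F.wires ∧ mkWire x₂ a c ∈ F.wires ∧
    (∀ w ∈ F.wires, ¬ (x₁ < w.1 ∧ w.1 < x₂)) ∧
    F'.wires = insert (mkWire x₁ b c) (insert (mkWire x₂ b a)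
      ((F.wires.erase (mkWire x₁ a b)).erase (mkWire x₂ a c)))

/-- Inflation: a new post is added at a fresh vertical level and joined to some
existing post by one new wire (on a fresh vertical line). -/
def Inflation (F F' : Fence) : Prop :=
  F'.l = F.l ∧ F'.r = F.r ∧
  ∃ n m x : ℝ, n ∉ F.posts ∧ m ∈ F.posts ∧
    F.l < x ∧ x < F.r ∧ (∀ w ∈ F.wires, w.1 ≠ x) ∧
    F'.posts = insert n F.posts ∧
    F'.wires = insert (mkWire x n m) F.wires

/-- A fence move: a twirl, a turn, a slip, a slide, an inflation or a deflation. -/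
def FenceMove (F F' : Fence) : Prop :=
  Twirl F F' ∨ Turn F F' ∨ Slip F F' ∨ Slide F F' ∨ Inflation F F' ∨ Inflation F' F

/-- One step in a sequence of fence moves; combinatorially equivalent fence diagrams
are identified. -/
def FenceStep (F F' : Fence) : Prop := FenceMove F F' ∨ FenceEquiv F F'

/-- `R(F)`: the generalized rectangular diagram whose vertices are the endpoints of
the wires of the fence diagram `F`. -/
noncomputable def fenceToGRD (F : Fence) : GRD :=
  F.wires.image (fun w => (w.1, w.2.1)) ∪ F.wires.image (fun w => (w.1, w.2.2))

/-- Every vertical edge of the diagram contains exactly two vertices. -/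
def VertTwo (R : GRD) : Prop :=
  ∀ a : ℝ, (∃ y : ℝ, (a, y) ∈ R) →
    ∃ y₁ y₂ : ℝ, y₁ < y₂ ∧ ∀ y : ℝ, ((a, y) ∈ R ↔ (y = y₁ ∨ y = y₂))

/-- `F` is a fence diagram `F(R)` of the diagram `R` (each of whose vertical edges is
assumed to contain exactly two vertices): its wires are the vertical edges of `R` and
its posts are horizontal segments at exactly the levels of the horizontal edges of
`R`. -/
def IsFenceOf (R : GRD) (F : Fence) : Prop :=
  F.posts = R.image Prod.snd ∧
  ∀ w : ℝ × ℝ × ℝ,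
    (w ∈ F.wires ↔ ((w.1, w.2.1) ∈ R ∧ (w.1, w.2.2) ∈ R ∧ w.2.1 < w.2.2))

/-! Combinatorial equivalence and commutations let a vertical edge pass any vertical edge with
which it does not interleave. To carry an extreme edge `{y₁, y₂}` to the opposite side of the
diagram, add a vertex to it at a height `t` just above `y₁` and detach `{y₁, t}` by an end shift.
No vertex lies strictly between `y₁` and `t`, so this piece travels freely to the other side. Now
the horizontal edge at height `t` spans the whole diagram, hence interleaves with no other and can
be raised to just below `y₂`, after which the second piece travels freely as well, and the
splitting is undone. An edge with more vertices is carried over by splitting off its lowest two,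
and horizontal edges are handled by reflecting the diagram in the diagonal. A stabilization of
type L is a vertex addition followed by an end shift. -/

section Order

variable {α : Type*} [LinearOrder α] [DenselyOrdered α]

theorem exists_gt_forall_le_or_gt (s : Finset α) {a z : α} (haz : a < z) :
    ∃ t, a < t ∧ t < z ∧ ∀ x ∈ s, x ≤ a ∨ t < x := by
  let above := insert z (s.filter (a < ·))
  have hne : above.Nonempty := Finset.insert_nonempty _ _
  have ha : a < above.min' hne := by simp [above, Finset.lt_min'_iff, haz]
  obtain ⟨t, hat, ht⟩ := exists_between ha
  simp only [Finset.lt_min'_iff, above, Finset.mem_insert, Finset.mem_filter] at ht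
  exact ⟨t, hat, ht z (.inl rfl), fun x hx => or_iff_not_imp_left.2 fun hxa =>
    ht x (.inr ⟨hx, not_le.1 hxa⟩)⟩

theorem exists_lt_forall_ge_or_lt (s : Finset α) {z a : α} (hza : z < a) :
    ∃ t, z < t ∧ t < a ∧ ∀ x ∈ s, a ≤ x ∨ x < t := by
  obtain ⟨t, hta, hzt, ht⟩ :=
    exists_gt_forall_le_or_gt (α := αᵒᵈ) s (OrderDual.toDual_lt_toDual.2 hza)
  exact ⟨t, hzt, hta, ht⟩

end Order

theorem exists_pos_forall_mul_sub_le_of_strictMonoOn {s : Finset ℝ} {f : ℝ → ℝ}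
    (hf : StrictMonoOn f s) :
    ∃ m > 0, ∀ x ∈ s, ∀ y ∈ s, x < y → m * (y - x) ≤ f y - f x := by
  let slopes := ((s ×ˢ s).filter fun q => q.1 < q.2).image fun q => (f q.2 - f q.1) / (q.2 - q.1)
  have slopes_pos : ∀ r ∈ slopes, 0 < r := by
    simp only [slopes, Finset.forall_mem_image, Finset.mem_filter, Finset.mem_product]
    rintro ⟨x, y⟩ ⟨⟨hx, hy⟩, hxy⟩
    exact div_pos (sub_pos.2 (hf hx hy hxy)) (sub_pos.2 hxy)
  obtain ⟨m, hm0, hm⟩ := Order.exists_between_finsets (lo := {0}) (hi := slopes) (by simpa)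
  simp only [slopes, Finset.forall_mem_image, Finset.mem_filter, Finset.mem_product] at hm
  refine ⟨m, by simpa using hm0, fun x hx y hy hxy => ?_⟩
  exact ((lt_div_iff₀ (sub_pos.2 hxy)).1 (hm (x := (x, y)) ⟨⟨hx, hy⟩, hxy⟩)).le

/- Subtracting a linear function of small slope keeps `f` monotone on `s`; extend the difference
monotonically and add the linear function back. -/
theorem exists_strictMono_eqOn {s : Finset ℝ} {f : ℝ → ℝ} (hf : StrictMonoOn f s) :
    ∃ g : ℝ → ℝ, StrictMono g ∧ Set.EqOn g f s := by
  obtain ⟨m, hm0, hm⟩ := exists_pos_forall_mul_sub_le_of_strictMonoOn hf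
  have hmono : MonotoneOn (fun x => f x - m * x) s := by
    intro x hx y hy hxy
    rcases hxy.eq_or_lt with rfl | hlt
    · rfl
    · linarith [hm x hx y hy hlt]
  have hfin := s.finite_toSet.image fun x => f x - m * x
  obtain ⟨g, hg, hgf⟩ := hmono.exists_monotone_extension hfin.bddBelow hfin.bddAbove
  refine ⟨fun x => g x + m * x, hg.add_strictMono (strictMono_id.const_mul hm0), fun x hx => ?_⟩
  simp [← hgf hx]

theorem interleave_comm {A B : ℝ → Prop} : Interleave A B ↔ Interleave B A := or_comm

theorem not_interleave_of_separated {A B : ℝ → Prop} (u v : ℝ) (hA : ∀ x, A x → u ≤ x ∧ x ≤ v)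
    (hB : ∀ x, B x → x ≤ u ∨ v ≤ x) : ¬ Interleave A B := by
  rintro (⟨a₁, ha₁, b₁, hb₁, a₂, ha₂, _, _, h₁, h₂, _⟩ |
    ⟨_, _, a₁, ha₁, b₂, hb₂, a₂, ha₂, _, h₁, h₂⟩)
  · grind
  · grind

/-- The generators of the smaller of the two equivalence relations: commutations, end shifts of
type L and vertex additions, together with the identification of combinatorially equivalent
diagrams. -/
def CoreMove (R R' : GRD) : Prop :=
  Commutation R R' ∨ EndShift true R R' ∨ VertexAddition R R' ∨ CombEquiv R R'

/-- The equivalence relation generated by the core moves. -/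
abbrev CoreEquiv : GRD → GRD → Prop := Relation.EqvGen CoreMove

local infix:50 "≈ᶜ" => CoreEquiv

section Transpose

variable {R R' : GRD} {a b : ℝ}

/-- The reflection of a diagram in the diagonal, exchanging its vertical and horizontal lines. -/
noncomputable def transpose (R : GRD) : GRD := R.image Prod.swap

@[simp] theorem mem_transpose {p : ℝ × ℝ} : p ∈ transpose R ↔ p.swap ∈ R := by
  cases p; simp [transpose]

@[simp] theorem forall_mem_transpose {P : ℝ × ℝ → Prop} :
    (∀ p ∈ transpose R, P p) ↔ ∀ p ∈ R, P p.swap :=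
  Finset.forall_mem_image

@[simp] theorem exists_mem_transpose {P : ℝ × ℝ → Prop} :
    (∃ p ∈ transpose R, P p) ↔ ∃ p ∈ R, P p.swap :=
  Finset.exists_mem_image

@[simp] theorem transpose_transpose (R : GRD) : transpose (transpose R) = R := by
  ext; simp

theorem transpose_insert (R : GRD) (p : ℝ × ℝ) :
    transpose (insert p R) = insert p.swap (transpose R) :=
  Finset.image_insert _ _ _

theorem transpose_erase (R : GRD) (p : ℝ × ℝ) :
    transpose (R.erase p) = (transpose R).erase p.swap :=
  Finset.image_erase Prod.swap_injective _ _

theorem transpose_image {F G : ℝ × ℝ → ℝ × ℝ} (h : Function.Semiconj Prod.swap F G) (R : GRD) :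
    transpose (R.image F) = (transpose R).image G :=
  h.finset_image R

theorem transpose_moveRow (R : GRD) (a b : ℝ) :
    transpose (moveRow R a b) = moveCol (transpose R) a b :=
  transpose_image (by intro p; dsimp only; split_ifs <;> simp_all) R

theorem transpose_swapCols (R : GRD) (a b : ℝ) :
    transpose (swapCols R a b) = swapRows (transpose R) a b :=
  transpose_image (by intro p; dsimp only; split_ifs <;> simp_all) R

theorem transpose_swapRows (R : GRD) (a b : ℝ) :
    transpose (swapRows R a b) = swapCols (transpose R) a b :=
  transpose_image (by intro p; dsimp only; split_ifs <;> simp_all) R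

theorem Commutation.transpose (h : Commutation R R') :
    Commutation (transpose R) (transpose R') := by
  rcases h with ⟨a, b, hab, ha, hb, hgap, hI, rfl⟩ | ⟨a, b, hab, ha, hb, hgap, hI, rfl⟩
  · exact .inr ⟨a, b, hab, exists_mem_transpose.2 ha, exists_mem_transpose.2 hb,
      forall_mem_transpose.2 hgap, by simpa using hI, transpose_swapCols R a b⟩
  · exact .inl ⟨a, b, hab, exists_mem_transpose.2 ha, exists_mem_transpose.2 hb,
      forall_mem_transpose.2 hgap, by simpa using hI, transpose_swapRows R a b⟩

theorem EndShift.transpose {typeL : Bool} (h : EndShift typeL R R') :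
    EndShift typeL (transpose R) (transpose R') := by
  rcases h with ⟨a, y₁, y₂, ε, hε, hy, h₁, h₂, hadj, h⟩ | ⟨a, x₁, x₂, ε, hε, hx, h₁, h₂, hadj, h⟩
  · refine .inr ⟨a, y₁, y₂, ε, hε, hy, by simpa, by simpa, by simpa using hadj, ?_⟩
    exact h.imp
      (And.imp forall_mem_transpose.2 fun h => by simp [h, transpose_insert, transpose_erase])
      (And.imp forall_mem_transpose.2 fun h => by simp [h, transpose_insert, transpose_erase])
  · refine .inl ⟨a, x₁, x₂, ε, hε, hx, by simpa, by simpa, by simpa using hadj, ?_⟩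
    exact h.imp
      (And.imp forall_mem_transpose.2 fun h => by simp [h, transpose_insert, transpose_erase])
      (And.imp forall_mem_transpose.2 fun h => by simp [h, transpose_insert, transpose_erase])

theorem VertexAddition.transpose (h : VertexAddition R R') :
    VertexAddition (transpose R) (transpose R') := by
  obtain ⟨v, hv, rfl, hline⟩ := h
  exact ⟨v.swap, by simpa, transpose_insert R v, hline.symm.imp
    (And.imp exists_mem_transpose.2 forall_mem_transpose.2)
    (And.imp exists_mem_transpose.2 forall_mem_transpose.2)⟩

theorem CombEquiv.transpose (h : CombEquiv R R') : CombEquiv (transpose R) (transpose R') := by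
  obtain ⟨f, g, hf, hg, rfl⟩ := h
  exact ⟨g, f, hg, hf, transpose_image (fun _ => by simp) R⟩

theorem CoreMove.transpose (h : CoreMove R R') : CoreMove (transpose R) (transpose R') :=
  h.imp Commutation.transpose <|
    Or.imp EndShift.transpose <| Or.imp VertexAddition.transpose CombEquiv.transpose

theorem CoreEquiv.transpose (h : CoreEquiv R R') : CoreEquiv (transpose R) (transpose R') := by
  induction h with
  | rel _ _ h => exact .rel _ _ h.transpose
  | refl _ => exact .refl _
  | symm _ _ _ ih => exact ih.symm
  | trans _ _ _ _ _ ih₁ ih₂ => exact ih₁.trans _ _ _ ih₂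

end Transpose

section AddCol

variable {B : GRD} {S T : Finset ℝ} {a b c : ℝ}

/-- The diagram `B` with a vertex added on the line `x = a` at each height in `S`.  When `B` has
no vertex on that line, this singles out one vertical edge of a diagram. -/
noncomputable def addCol (B : GRD) (a : ℝ) (S : Finset ℝ) : GRD := B ∪ {a} ×ˢ S

/-- The diagram `B` with a vertex added on the line `y = c` at each abscissa in `T`: the
horizontal counterpart of `addCol`. -/
noncomputable def addRow (B : GRD) (c : ℝ) (T : Finset ℝ) : GRD := B ∪ T ×ˢ {c}

@[simp] theorem mem_addCol {p : ℝ × ℝ} : p ∈ addCol B a S ↔ p ∈ B ∨ p.1 = a ∧ p.2 ∈ S := by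
  cases p; simp [addCol, and_comm, eq_comm]

@[simp] theorem mem_addRow {p : ℝ × ℝ} : p ∈ addRow B c T ↔ p ∈ B ∨ p.1 ∈ T ∧ p.2 = c := by
  cases p; simp [addRow, and_comm, eq_comm]

theorem forall_mem_addCol {P : ℝ × ℝ → Prop} :
    (∀ p ∈ addCol B a S, P p) ↔ (∀ p ∈ B, P p) ∧ ∀ y ∈ S, P (a, y) := by
  simp only [mem_addCol, or_imp, forall_and, and_congr_right_iff]
  exact fun _ => ⟨fun h y hy => h (a, y) ⟨rfl, hy⟩, by rintro h ⟨_, y⟩ ⟨rfl, hy⟩; exact h y hy⟩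

@[simp] theorem addCol_empty (B : GRD) (a : ℝ) : addCol B a ∅ = B := by simp [addCol]

theorem addCol_right_comm (B : GRD) (a b : ℝ) (S T : Finset ℝ) :
    addCol (addCol B a S) b T = addCol (addCol B b T) a S :=
  Finset.union_right_comm _ _ _

theorem transpose_addCol (B : GRD) (a : ℝ) (S : Finset ℝ) :
    transpose (addCol B a S) = addRow (transpose B) a S := by
  ext; simp [and_comm]

theorem exists_eq_addCol (R : GRD) (a : ℝ) :
    ∃ B S, R = addCol B a S ∧ ∀ p ∈ B, p.1 ≠ a := by
  refine ⟨R.filter (·.1 ≠ a), (R.filter (·.1 = a)).image Prod.snd, ?_, by simp⟩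
  ext ⟨x, y⟩
  by_cases hx : x = a <;> simp [hx]

theorem image_addCol {F : ℝ × ℝ → ℝ × ℝ} (hS : ∀ y ∈ S, F (a, y) = (b, y)) :
    (addCol B a S).image F = addCol (B.image F) b S := by
  rw [addCol, addCol, Finset.image_union, Finset.singleton_product, Finset.singleton_product,
    Finset.map_eq_image, Finset.map_eq_image, Finset.image_image]
  congr 1
  exact Finset.image_congr hS

theorem image_eq_self {F : ℝ × ℝ → ℝ × ℝ} (hB : ∀ p ∈ B, F p = p) : B.image F = B :=
  (Finset.image_congr hB).trans Finset.image_id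

theorem moveCol_addCol (hB : ∀ p ∈ B, p.1 ≠ a) : moveCol (addCol B a S) a b = addCol B b S := by
  rw [moveCol, image_addCol (b := b) (by simp), image_eq_self fun p hp => if_neg (hB p hp)]

theorem swapCols_addCol_addCol (hab : a ≠ b) (hB : ∀ p ∈ B, p.1 ≠ a ∧ p.1 ≠ b) :
    swapCols (addCol (addCol B a S) b T) a b = addCol (addCol B b S) a T := by
  rw [swapCols, image_addCol (b := a) (by simp [hab.symm]), image_addCol (b := b) (by simp),
    image_eq_self fun p hp => by simp [hB p hp]]

theorem addCol_coreEquiv_of_forall_lt_or_gt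
    (hB : ∀ p ∈ B, p.1 < a ∧ p.1 < c ∨ a < p.1 ∧ c < p.1) : addCol B a S ≈ᶜ addCol B c S := by
  have hf : StrictMonoOn (Function.update id a c) (insert a (B.image Prod.fst) : Finset ℝ) := by
    have hB' : ∀ x ∈ B.image Prod.fst, x < a ∧ x < c ∨ a < x ∧ c < x := by
      simpa only [Finset.forall_mem_image] using hB
    intro x hx y hy hxy
    simp only [Finset.coe_insert, Set.mem_insert_iff, Finset.mem_coe] at hx hy
    simp only [Function.update_apply, id]
    grind
  obtain ⟨g, hg, hgf⟩ := exists_strictMono_eqOn hf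
  have hga : g a = c := by simpa using hgf (Finset.mem_coe.2 (Finset.mem_insert_self _ _))
  have hgB : ∀ p ∈ B, g p.1 = p.1 := by
    intro p hp
    have hpa : p.1 ≠ a := by grind
    simpa [hpa] using
      hgf (Finset.mem_coe.2 (Finset.mem_insert_of_mem (Finset.mem_image_of_mem Prod.fst hp)))
  refine .rel _ _ (.inr (.inr (.inr ⟨g, id, hg, strictMono_id, ?_⟩)))
  rw [image_addCol (b := c) (by simp [hga]), image_eq_self fun p hp => by simp [hgB p hp]]

theorem addCol_addCol_coreEquiv_swap (hab : a < b) (hB : ∀ p ∈ B, p.1 < a ∨ b < p.1)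
    (hI : ¬ Interleave (· ∈ S) (· ∈ T)) :
    addCol (addCol B a S) b T ≈ᶜ addCol (addCol B b S) a T := by
  have hBab : ∀ p ∈ B, p.1 < a ∧ p.1 < b ∨ a < p.1 ∧ b < p.1 := by grind
  rcases S.eq_empty_or_nonempty with rfl | ⟨s, hs⟩
  · simpa using (addCol_coreEquiv_of_forall_lt_or_gt hBab).symm
  rcases T.eq_empty_or_nonempty with rfl | ⟨t, ht⟩
  · simpa using addCol_coreEquiv_of_forall_lt_or_gt hBab
  have hne : ∀ p ∈ B, p.1 ≠ a ∧ p.1 ≠ b := by grind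
  refine .rel _ _ (.inl (.inl ⟨a, b, hab, ⟨(a, s), by simp [hs], rfl⟩, ⟨(b, t), by simp [ht], rfl⟩,
    ?_, ?_, (swapCols_addCol_addCol hab.ne hne).symm⟩))
  · simp only [forall_mem_addCol]
    grind
  · have haB (y : ℝ) : (a, y) ∉ B := fun h => (hne _ h).1 rfl
    have hbB (y : ℝ) : (b, y) ∉ B := fun h => (hne _ h).2 rfl
    simpa [haB, hbB, hab.ne, hab.ne'] using hI

theorem addCol_coreEquiv_across {d : ℝ} (had : a < d) (hdc : d < c)
    (hB : ∀ p ∈ B, p.1 < a ∨ p.1 = d ∨ c < p.1)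
    (hI : ¬ Interleave (· ∈ S) (fun y => (d, y) ∈ B)) : addCol B a S ≈ᶜ addCol B c S := by
  obtain ⟨B, T, rfl, hBd⟩ := exists_eq_addCol B d
  have hI' : ¬ Interleave (· ∈ S) (· ∈ T) := by
    have hdB (y : ℝ) : (d, y) ∉ B := fun h => hBd _ h rfl
    simpa [hdB] using hI
  have hB' : ∀ p ∈ B, p.1 < a ∨ c < p.1 := by
    have := (forall_mem_addCol.1 hB).1
    grind
  calc addCol (addCol B d T) a S
    _ = addCol (addCol B a S) d T := addCol_right_comm ..
    _ ≈ᶜ addCol (addCol B a S) c T :=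
      addCol_coreEquiv_of_forall_lt_or_gt (forall_mem_addCol.2 ⟨by grind, by grind⟩)
    _ = addCol (addCol B c T) a S := addCol_right_comm ..
    _ ≈ᶜ addCol (addCol B c T) d S :=
      addCol_coreEquiv_of_forall_lt_or_gt (forall_mem_addCol.2 ⟨by grind, by grind⟩)
    _ = addCol (addCol B d S) c T := addCol_right_comm ..
    _ ≈ᶜ addCol (addCol B c S) d T := addCol_addCol_coreEquiv_swap hdc (by grind) hI'
    _ = addCol (addCol B d T) c S := addCol_right_comm ..

theorem addCol_coreEquiv_of_lt (hac : a < c) (ha : ∀ p ∈ B, p.1 ≠ a) (hc : ∀ p ∈ B, p.1 ≠ c)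
    (hI : ∀ d, ¬ Interleave (· ∈ S) (fun y => (d, y) ∈ B)) : addCol B a S ≈ᶜ addCol B c S := by
  induction hX : (B.image Prod.fst).filter (fun x => a < x ∧ x < c) using
    Finset.strongInduction generalizing c with | H X ih
  subst hX
  rcases ((B.image Prod.fst).filter (fun x => a < x ∧ x < c)).eq_empty_or_nonempty with hX | hX
  · simp only [Finset.filter_eq_empty_iff, Finset.forall_mem_image] at hX
    exact addCol_coreEquiv_of_forall_lt_or_gt (by grind)
  obtain ⟨d, hd, hdmax⟩ := Finset.exists_max_image _ id hX
  simp only [Finset.mem_filter, and_imp, Finset.forall_mem_image, id] at hd hdmax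
  obtain ⟨hdB, had, hdc⟩ := hd
  obtain ⟨e, hae, hed, he⟩ := exists_lt_forall_ge_or_lt (B.image Prod.fst) had
  simp only [Finset.forall_mem_image] at he
  have hfewer : (B.image Prod.fst).filter (fun x => a < x ∧ x < e) ⊂
      (B.image Prod.fst).filter (fun x => a < x ∧ x < c) := by
    refine Finset.ssubset_iff_of_subset ?_ |>.2 ⟨d, by simp [hdB, had, hdc], by simp [hed.le]⟩
    exact Finset.monotone_filter_right _ fun x _ hx => ⟨hx.1, hx.2.trans (hed.trans hdc)⟩
  calc addCol B a S
    _ ≈ᶜ addCol B e S := ih _ hfewer hae (by grind) rfl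
    _ ≈ᶜ addCol B c S := addCol_coreEquiv_across hed hdc (by grind) (hI d)

theorem addCol_coreEquiv (ha : ∀ p ∈ B, p.1 ≠ a) (hc : ∀ p ∈ B, p.1 ≠ c)
    (hI : ∀ d, ¬ Interleave (· ∈ S) (fun y => (d, y) ∈ B)) : addCol B a S ≈ᶜ addCol B c S := by
  rcases lt_trichotomy a c with h | rfl | h
  · exact addCol_coreEquiv_of_lt h ha hc hI
  · exact .refl _
  · exact (addCol_coreEquiv_of_lt h hc ha hI).symm

theorem addRow_coreEquiv (ha : ∀ p ∈ B, p.2 ≠ a) (hc : ∀ p ∈ B, p.2 ≠ c)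
    (hI : ∀ d, ¬ Interleave (· ∈ S) (fun x => (x, d) ∈ B)) : addRow B a S ≈ᶜ addRow B c S := by
  have h : addCol (transpose B) a S ≈ᶜ addCol (transpose B) c S :=
    addCol_coreEquiv (forall_mem_transpose.2 ha) (forall_mem_transpose.2 hc) (by simpa using hI)
  simpa only [transpose_addCol, transpose_transpose] using h.transpose

end AddCol

section EndShift

variable {R R' B : GRD} {S : Finset ℝ} {a b x x' y₁ y₂ t t' : ℝ}

theorem endShift_right (hx : x < x') (hy : y₁ < y₂) (h₁ : (x, y₁) ∈ R) (h₂ : (x, y₂) ∈ R)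
    (hadj : ∀ s, (x, s) ∈ R → ¬ (y₁ < s ∧ s < y₂)) (hgap : ∀ p ∈ R, ¬ (x < p.1 ∧ p.1 ≤ x')) :
    EndShift true R (insert (x', y₁) (insert (x', y₂) (R.erase (x, y₁)))) :=
  .inl ⟨x, y₁, y₂, x' - x, sub_pos.2 hx, hy, h₁, h₂, hadj, .inl ⟨by simpa using hgap, by simp⟩⟩

theorem endShift_left (hx : x' < x) (hy : y₁ < y₂) (h₁ : (x, y₁) ∈ R) (h₂ : (x, y₂) ∈ R)
    (hadj : ∀ s, (x, s) ∈ R → ¬ (y₁ < s ∧ s < y₂)) (hgap : ∀ p ∈ R, ¬ (x' ≤ p.1 ∧ p.1 < x)) :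
    EndShift true R (insert (x', y₁) (insert (x', y₂) (R.erase (x, y₂)))) :=
  .inl ⟨x, y₁, y₂, x - x', sub_pos.2 hx, hy, h₁, h₂, hadj, .inr ⟨by simpa using hgap, by simp⟩⟩

theorem coreEquiv_insert_of_vertical (hx : ∃ p ∈ R, p.1 = x) (hy : ∀ p ∈ R, p.2 ≠ y₁) :
    R ≈ᶜ insert (x, y₁) R :=
  .rel _ _ (.inr (.inr (.inl ⟨(x, y₁), fun h => hy _ h rfl, rfl, .inl ⟨hx, hy⟩⟩)))

theorem Stab.coreEquiv (h : Stab true R R') : R ≈ᶜ R' := by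
  obtain ⟨x, y, x', y', hxy, hcorner, hgapx, hgapy, hx', hy', rfl⟩ := h
  refine (coreEquiv_insert_of_vertical ⟨_, hxy, rfl⟩ hy').trans _ _ _ (.rel _ _ (.inr (.inl ?_)))
  have hne : (x, y) ≠ (x, y') := fun h => hy' _ hxy (Prod.ext_iff.1 h).2
  simp only [strictlyBetween] at hgapx hgapy
  rw [if_pos rfl] at hcorner
  rcases hcorner with ⟨hx, hy⟩ | ⟨hx, hy⟩
  · convert endShift_right (R := insert (x, y') R) hx hy (by simp [hxy]) (by simp) ?_ ?_ using 1
    · rw [Finset.erase_insert_of_ne hne.symm, Finset.insert_comm (x', y')]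
    · grind
    · simp only [Finset.forall_mem_insert]
      grind
  · convert endShift_left (R := insert (x, y') R) hx hy (by simp) (by simp [hxy]) ?_ ?_ using 1
    · rw [Finset.erase_insert_of_ne hne.symm]
      grind
    · grind
    · simp only [Finset.forall_mem_insert]
      grind

theorem addCol_insert_coreEquiv_split (hab : a < b) (hB : ∀ p ∈ B, p.1 < a ∨ b < p.1)
    (hy : y₁ < y₂) (hy₂ : y₂ ∈ S) (hS : ∀ y ∈ S, y₂ ≤ y) :
    addCol B a (insert y₁ S) ≈ᶜ addCol (addCol B a S) b {y₁, y₂} := by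
  have haB (y : ℝ) : (a, y) ∉ B := fun h => by grind
  have hmove := endShift_right (R := addCol B a (insert y₁ S)) hab hy (by simp) (by simp [hy₂])
    (by simp [haB]; grind) (forall_mem_addCol.2 ⟨by grind, by grind⟩)
  convert Relation.EqvGen.rel (r := CoreMove) _ _ (.inr (.inl hmove)) using 1
  ext ⟨u, v⟩
  grind [mem_addCol]

theorem addCol_pair_coreEquiv_split (hab : a < b) (hB : ∀ p ∈ B, p.1 < a ∨ b < p.1)
    (hy₁ : y₁ < t) (hy₂ : t < y₂) (ht : ∀ p ∈ B, p.2 ≠ t) :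
    addCol B a {y₁, y₂} ≈ᶜ addCol (addCol B a {t, y₂}) b {y₁, t} := by
  calc addCol B a {y₁, y₂}
    _ ≈ᶜ insert (a, t) (addCol B a {y₁, y₂}) :=
      coreEquiv_insert_of_vertical ⟨(a, y₁), by simp, rfl⟩ (forall_mem_addCol.2 ⟨ht, by grind⟩)
    _ = addCol B a (insert y₁ {t, y₂}) := by
      ext; grind [mem_addCol]
    _ ≈ᶜ addCol (addCol B a {t, y₂}) b {y₁, t} :=
      addCol_insert_coreEquiv_split hab hB hy₁ (by simp) (by simp [hy₂.le])

theorem addCol_pair_coreEquiv (hy : y₁ ≤ y₂) (ha : ∀ p ∈ B, p.1 ≠ a) (hb : ∀ p ∈ B, p.1 ≠ b)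
    (hB : ∀ p ∈ B, p.2 ≤ y₁ ∨ y₂ ≤ p.2) : addCol B a {y₁, y₂} ≈ᶜ addCol B b {y₁, y₂} := by
  refine addCol_coreEquiv ha hb fun d => not_interleave_of_separated y₁ y₂ ?_ ?_
  · simp [hy]
  · exact fun y hyB => hB _ hyB

theorem addCol_addCol_coreEquiv_of_span (hba : b ≤ a) (hB : ∀ p ∈ B, b ≤ p.1 ∧ p.1 ≤ a)
    (ht : ∀ p ∈ addCol (addCol B a {y₂}) b {y₁}, p.2 ≠ t ∧ p.2 ≠ t') :
    addCol (addCol B a {t, y₂}) b {y₁, t} ≈ᶜ addCol (addCol B a {t', y₂}) b {y₁, t'} := by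
  have hrow (s : ℝ) : addCol (addCol B a {s, y₂}) b {y₁, s} =
      addRow (addCol (addCol B a {y₂}) b {y₁}) s {b, a} := by
    ext; grind [mem_addCol, mem_addRow]
  have hspan : ∀ p ∈ addCol (addCol B a {y₂}) b {y₁}, b ≤ p.1 ∧ p.1 ≤ a := by
    simp only [forall_mem_addCol]
    grind
  rw [hrow, hrow]
  refine addRow_coreEquiv (fun p hp => (ht p hp).1) (fun p hp => (ht p hp).2) fun d => ?_
  rw [interleave_comm]
  exact not_interleave_of_separated b a (fun x hx => hspan _ hx) (by simp)

theorem addCol_pair_coreEquiv_of_extreme (hba : b < a) (hB : ∀ p ∈ B, b < p.1 ∧ p.1 < a)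
    (hy : y₁ < y₂) : addCol B a {y₁, y₂} ≈ᶜ addCol B b {y₁, y₂} := by
  obtain ⟨t', hyt', hty', ht'⟩ := exists_lt_forall_ge_or_lt (B.image Prod.snd) hy
  obtain ⟨t, hyt, htt', ht⟩ := exists_gt_forall_le_or_gt (B.image Prod.snd) hyt'
  simp only [Finset.forall_mem_image] at ht ht'
  calc addCol B a {y₁, y₂}
    _ ≈ᶜ addCol (addCol B a {t, y₂}) (a + 1) {y₁, t} :=
      addCol_pair_coreEquiv_split (lt_add_one a) (by grind) hyt (htt'.trans hty') (by grind)
    _ ≈ᶜ addCol (addCol B a {t, y₂}) b {y₁, t} :=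
      addCol_pair_coreEquiv hyt.le (forall_mem_addCol.2 ⟨by grind, by grind⟩)
        (forall_mem_addCol.2 ⟨by grind, by grind⟩) (forall_mem_addCol.2 ⟨by grind, by grind⟩)
    _ ≈ᶜ addCol (addCol B a {t', y₂}) b {y₁, t'} :=
      addCol_addCol_coreEquiv_of_span hba.le (by grind) <| by
        simp only [forall_mem_addCol]
        grind
    _ = addCol (addCol B b {y₁, t'}) a {t', y₂} := addCol_right_comm ..
    _ ≈ᶜ addCol (addCol B b {y₁, t'}) (b - 1) {t', y₂} :=
      addCol_pair_coreEquiv hty'.le (forall_mem_addCol.2 ⟨by grind, by grind⟩)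
        (forall_mem_addCol.2 ⟨by grind, by grind⟩) (forall_mem_addCol.2 ⟨by grind, by grind⟩)
    _ = addCol (addCol B (b - 1) {t', y₂}) b {y₁, t'} := addCol_right_comm ..
    _ ≈ᶜ addCol B (b - 1) {y₁, y₂} :=
      (addCol_pair_coreEquiv_split (sub_one_lt b) (by grind) hyt' hty' (by grind)).symm
    _ ≈ᶜ addCol B b {y₁, y₂} := addCol_coreEquiv_of_forall_lt_or_gt (by grind)

theorem addCol_coreEquiv_of_extreme (hba : b < a) (hB : ∀ p ∈ B, b < p.1 ∧ p.1 < a) :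
    addCol B a S ≈ᶜ addCol B b S := by
  induction S using Finset.induction_on_min generalizing B a b with
  | empty => simpa using .refl _
  | insert y₁ S hS ih =>
    rcases S.eq_empty_or_nonempty with rfl | hne
    · exact addCol_coreEquiv (by grind) (by grind)
        fun d => not_interleave_of_separated y₁ y₁ (by simp) (fun y _ => le_total y y₁)
    obtain ⟨y₂, hy₂, hmin⟩ := Finset.exists_min_image S id hne
    calc addCol B a (insert y₁ S)
      _ ≈ᶜ addCol (addCol B a S) (a + 1) {y₁, y₂} :=
        addCol_insert_coreEquiv_split (lt_add_one a) (by grind) (hS y₂ hy₂) hy₂ hmin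
      _ ≈ᶜ addCol (addCol B a S) b {y₁, y₂} :=
        addCol_pair_coreEquiv_of_extreme (by linarith) (forall_mem_addCol.2 ⟨by grind, by grind⟩)
          (hS y₂ hy₂)
      _ = addCol (addCol B b {y₁, y₂}) a S := addCol_right_comm ..
      _ ≈ᶜ addCol (addCol B b {y₁, y₂}) (b - 1) S :=
        ih (by linarith) (forall_mem_addCol.2 ⟨by grind, by grind⟩)
      _ = addCol (addCol B (b - 1) S) b {y₁, y₂} := addCol_right_comm ..
      _ ≈ᶜ addCol B (b - 1) (insert y₁ S) :=
        (addCol_insert_coreEquiv_split (sub_one_lt b) (by grind) (hS y₂ hy₂) hy₂ hmin).symm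
      _ ≈ᶜ addCol B b (insert y₁ S) := addCol_coreEquiv_of_forall_lt_or_gt (by grind)

end EndShift

theorem coreEquiv_moveCol {R : GRD} {a b : ℝ} (ha : ∃ p ∈ R, p.1 = a)
    (h : ((∀ p ∈ R, p.1 ≤ a) ∧ ∀ p ∈ R, b < p.1) ∨ ((∀ p ∈ R, a ≤ p.1) ∧ ∀ p ∈ R, p.1 < b)) :
    R ≈ᶜ moveCol R a b := by
  obtain ⟨q, hq, rfl⟩ := ha
  obtain ⟨B, S, hR, hB⟩ := exists_eq_addCol R q.1
  have hBR : ∀ p ∈ B, p ∈ R := fun p hp => hR ▸ mem_addCol.2 (.inl hp)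
  rw [hR, moveCol_addCol hB]
  rcases h with ⟨hmax, hb⟩ | ⟨hmin, hb⟩
  · exact addCol_coreEquiv_of_extreme (hb q hq) (by grind)
  · exact (addCol_coreEquiv_of_extreme (hb q hq) (by grind)).symm

theorem coreEquiv_moveRow {R : GRD} {a b : ℝ} (ha : ∃ p ∈ R, p.2 = a)
    (h : ((∀ p ∈ R, p.2 ≤ a) ∧ ∀ p ∈ R, b < p.2) ∨ ((∀ p ∈ R, a ≤ p.2) ∧ ∀ p ∈ R, p.2 < b)) :
    R ≈ᶜ moveRow R a b := by
  have hcol : transpose R ≈ᶜ moveCol (transpose R) a b :=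
    coreEquiv_moveCol (exists_mem_transpose.2 ha) <| h.imp
      (And.imp forall_mem_transpose.2 forall_mem_transpose.2)
      (And.imp forall_mem_transpose.2 forall_mem_transpose.2)
  simpa only [← transpose_moveRow, transpose_transpose] using hcol.transpose

theorem CyclicPermutation.coreEquiv {R R' : GRD} (h : CyclicPermutation R R') : R ≈ᶜ R' := by
  rcases h with ⟨a, b, ha, hab, rfl⟩ | ⟨a, b, ha, hab, rfl⟩
  · exact coreEquiv_moveCol ha hab
  · exact coreEquiv_moveRow ha hab

theorem Step.coreEquiv {R R' : GRD} (h : Step true R R') : R ≈ᶜ R' := by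
  rcases h with (h | h | h | h | h | h) | h
  · exact h.coreEquiv
  · exact .rel _ _ (.inl h)
  · exact h.coreEquiv
  · exact h.coreEquiv.symm
  · exact .rel _ _ (.inr (.inl h))
  · exact .rel _ _ (.inr (.inr (.inl h)))
  · exact .rel _ _ (.inr (.inr (.inr h)))

theorem CoreMove.step {R R' : GRD} (h : CoreMove R R') : Step true R R' := by
  rcases h with h | h | h | h
  · exact .inl (.inr (.inl h))
  · exact .inl (.inr (.inr (.inr (.inr (.inl h)))))
  · exact .inl (.inr (.inr (.inr (.inr (.inr h)))))
  · exact .inr h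

/-- the equivalence relation on generalized rectangular diagrams generated
by the elementary moves of type L coincides with the equivalence relation generated by
commutations, end shifts of type L and vertex additions alone (diagrams being
identified up to combinatorial equivalence throughout). -/
theorem statement0 :
    Relation.EqvGen (Step true) =
      Relation.EqvGen (fun R R' : GRD =>
        Commutation R R' ∨ EndShift true R R' ∨ VertexAddition R R' ∨ CombEquiv R R') := by
  apply le_antisymm
  · exact Relation.EqvGen.eqvGen_le fun _ _ => Step.coreEquiv
  · exact Relation.EqvGen.eqvGen_mono fun _ _ => CoreMove.step

end RectDiag
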